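/- (Irreducible invariance) Let λ ∈ Λ_I⁺ and β ∈ Ψ_λ⁺. Then there exists μ ∈ Λ_I⁺ with sgn(s_βλ, μ) ≠ 0 if and only if there exists μ' ∈ Λ⁺(Φ_I ∩ Φ_{β,0}, Φ_{β,0}) with sgn(s_β(λ|_{Φ_{β,0}}), μ', Φ_I ∩ Φ_{β,0}, Φ_{β,0}) ≠ 0. In particular, if sgn(s_βλ, μ) ≠ 0, then μ' = μ|_{Φ_{β,0}} and c(λ,μ) = c(λ|_{Φ_{β,0}}, μ|_{Φ_{β,0}}, Φ_I ∩ Φ_{β,0}, Φ_{β,0}). -/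

import Mathlib

open scoped RealInnerProductSpace
open Classical

noncomputable section

namespace JantzenGVM

variable {V : Type*} [NormedAddCommGroup V] [InnerProductSpace ℝ V] [FiniteDimensional ℝ V]

/-- The coroot `α^∨ = 2α/⟨α,α⟩` of a vector `α` (junk value `0` when `α = 0`). -/
def coroot (α : V) : V := (2 / ⟪α, α⟫) • α

/-- The linear functional `v ↦ ⟨v, α^∨⟩`. -/
def corootForm (α : V) : V →ₗ[ℝ] ℝ where
  toFun v := ⟪v, coroot α⟫
  map_add' x y := by simp [inner_add_left]
  map_smul' c x := by simp [inner_smul_left]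

lemma corootForm_self {α : V} (h : ⟪α, α⟫ ≠ 0) : corootForm α α = 2 := by
  simp only [corootForm, coroot, LinearMap.coe_mk, AddHom.coe_mk, real_inner_smul_right]
  field_simp

/-- The reflection `s_α` as a linear automorphism of `V` (the identity when `⟨α,α⟩ = 0`). -/
def reflV (α : V) : V ≃ₗ[ℝ] V :=
  if h : ⟪α, α⟫ = 0 then LinearEquiv.refl ℝ V
  else Module.reflection (corootForm_self h)

/-- `h* = ℂ ⊗ V`, realized as the space of real-linear functionals `V → ℂ` via the
inner product; an element `λ` pairs with a root `α` by `⟨λ, α⟩ = λ α` and with the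
coroot by `⟨λ, α^∨⟩ = λ (coroot α)`. -/
abbrev HStar (V : Type*) [NormedAddCommGroup V] [InnerProductSpace ℝ V] := V →ₗ[ℝ] ℂ

/-- The canonical embedding of `V` into `h*`. -/
def emb (α : V) : HStar V where
  toFun v := (⟪α, v⟫ : ℂ)
  map_add' x y := by simp [inner_add_right]
  map_smul' c x := by simp [inner_smul_right, Complex.real_smul]

/-- The action of a linear automorphism `w` of `V` on `h*`: `(w • λ)(v) = λ(w⁻¹ v)`. -/
def wAct (w : V ≃ₗ[ℝ] V) (l : HStar V) : HStar V := l ∘ₗ (w.symm : V →ₗ[ℝ] V)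

/-- The reflection `s_β λ = λ - ⟨λ, β^∨⟩ β` acting on `h*`. -/
def sRefl (β : V) (l : HStar V) : HStar V := l - l (coroot β) • emb β

/-- The group generated by the reflections in the elements of `Φ'`. -/
def weyl (Φ' : Set V) : Subgroup (V ≃ₗ[ℝ] V) :=
  Subgroup.closure {w | ∃ α ∈ Φ', w = reflV α}

/-- A finite, reduced, crystallographic root system spanning the Euclidean space `V`,
together with a choice of positive system and the corresponding simple system. -/
structure RootSys (V : Type*) [NormedAddCommGroup V] [InnerProductSpace ℝ V]
    [FiniteDimensional ℝ V] where
  Φ : Finset V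
  pos : Finset V
  Δ : Finset V
  ne_zero : ∀ α ∈ Φ, α ≠ (0 : V)
  span_eq_top : Submodule.span ℝ (Φ : Set V) = ⊤
  reduced : ∀ α ∈ Φ, ∀ c : ℝ, c • α ∈ Φ → c = 1 ∨ c = -1
  refl_mem : ∀ α ∈ Φ, ∀ β ∈ Φ, reflV α β ∈ Φ
  crystallographic : ∀ α ∈ Φ, ∀ β ∈ Φ, ∃ n : ℤ, ⟪β, coroot α⟫ = (n : ℝ)
  pos_subset : pos ⊆ Φ
  mem_pos_or : ∀ α ∈ Φ, α ∈ pos ∨ -α ∈ pos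
  not_both : ∀ α ∈ pos, -α ∉ pos
  simple_subset : Δ ⊆ pos
  simple_indep : LinearIndependent ℝ (fun x : {a : V // a ∈ Δ} => x.1)
  simple_gen : ∀ β ∈ pos, ∃ c : V → ℝ, (∀ α ∈ Δ, 0 ≤ c α) ∧ β = ∑ α ∈ Δ, c α • α

/-- A subsystem of the root system: a subset of `Φ` closed under its own reflections. -/
def IsSubsystem (S : RootSys V) (Φ' : Set V) : Prop :=
  Φ' ⊆ (S.Φ : Set V) ∧ ∀ α ∈ Φ', ∀ β ∈ Φ', reflV α β ∈ Φ'

/-- The length of `w`, i.e. the number of positive roots sent to negative roots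
(this equals the Coxeter length for elements of the Weyl group). -/
def len (S : RootSys V) (w : V ≃ₗ[ℝ] V) : ℕ :=
  {β ∈ (S.pos : Set V) | w β ∉ (S.pos : Set V)}.ncard

/-- `Φ_I = ℤI ∩ Φ`, the subsystem generated by a subset `I` of the simple roots. -/
def PhiI (S : RootSys V) (I : Finset V) : Set V :=
  {α ∈ (S.Φ : Set V) | α ∈ Submodule.span ℤ (I : Set V)}

/-- `z` is a positive integer. -/
def IsPosInt (z : ℂ) : Prop := ∃ n : ℤ, 0 < n ∧ z = (n : ℂ)

/-- `z` is an integer. -/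
def IsInt (z : ℂ) : Prop := ∃ n : ℤ, z = (n : ℂ)

/-- `Λ_I⁺ = {λ ∈ h* : ⟨λ, α^∨⟩ ∈ ℤ_{>0} for all α ∈ I}`. -/
def LambdaP (I : Set V) : Set (HStar V) :=
  {l | ∀ α ∈ I, IsPosInt (l (coroot α))}

/-- `Λ⁺(Φ'', Φ') = {ν ∈ ℂΦ' : ⟨ν, α^∨⟩ ∈ ℤ_{>0} for all α ∈ Φ'' ∩ Φ⁺}`. -/
def LambdaPSub (S : RootSys V) (Φ'' Φ' : Set V) : Set (HStar V) :=
  {l | l ∈ Submodule.span ℂ (emb '' Φ') ∧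
       ∀ α ∈ Φ'' ∩ (S.pos : Set V), IsPosInt (l (coroot α))}

/-- `λ` is `Φ''`-regular: `⟨λ, α⟩ ≠ 0` for all `α ∈ Φ''`. -/
def IsRegularOn (Φ'' : Set V) (l : HStar V) : Prop := ∀ α ∈ Φ'', l α ≠ 0

/-- `Ψ⁺(λ, Φ'', Φ') = {β ∈ (Φ' ∩ Φ⁺) \ Φ'' : ⟨λ, β^∨⟩ ∈ ℤ_{>0}}`. -/
def PsiP (S : RootSys V) (Φ'' Φ' : Set V) (l : HStar V) : Set V :=
  {β | β ∈ Φ' ∩ (S.pos : Set V) ∧ β ∉ Φ'' ∧ IsPosInt (l (coroot β))}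

/-- `Ψ⁺⁺(λ, Φ'', Φ') = {β ∈ Ψ⁺(λ, Φ'', Φ') : s_β λ is Φ''-regular}`. -/
def PsiPP (S : RootSys V) (Φ'' Φ' : Set V) (l : HStar V) : Set V :=
  {β ∈ PsiP S Φ'' Φ' l | ∀ α ∈ Φ'', (sRefl β l) α ≠ 0}

/-- The sign function: `sgn(λ, μ) = (-1)^{ℓ(w)}` if `λ, μ` are `Φ''`-regular and
`μ = wλ` for some `w ∈ W(Φ'')`, and `0` otherwise. -/
def sgnW (S : RootSys V) (Φ'' : Set V) (l m : HStar V) : ℤ :=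
  if h : IsRegularOn Φ'' l ∧ IsRegularOn Φ'' m ∧ ∃ w, w ∈ weyl Φ'' ∧ m = wAct w l
  then (-1) ^ len S h.2.2.choose else 0

/-- The Jantzen coefficient `c(λ, μ, Φ'', Φ') = Σ_{β ∈ Ψ⁺⁺(λ,Φ'',Φ')} sgn(s_β λ, μ)`. -/
def jc (S : RootSys V) (Φ'' Φ' : Set V) (l m : HStar V) : ℤ :=
  ∑ᶠ β ∈ PsiPP S Φ'' Φ' l, sgnW S Φ'' (sRefl β l) m

/-- The symmetrized Jantzen coefficient `c̃(λ, μ, Φ'', Φ')`. -/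
def jcSym (S : RootSys V) (Φ'' Φ' : Set V) (l m : HStar V) : ℤ :=
  jc S Φ'' Φ' l m + jc S Φ'' Φ' m l

/-- `θ(λ) = Σ_{w ∈ W_I} (-1)^{ℓ(w)} e^{wλ}` in the free `ℤ`-module on `h*`. -/
def theta (S : RootSys V) (I : Finset V) (l : HStar V) : HStar V →₀ ℤ :=
  ∑ᶠ w ∈ (weyl (PhiI S I) : Set (V ≃ₗ[ℝ] V)),
    Finsupp.single (wAct w l) ((-1) ^ len S w)

/-- `Φ_λ = {α ∈ Φ : ⟨λ, α⟩ = 0}`. -/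
def singSet (S : RootSys V) (l : HStar V) : Set V :=
  {α ∈ (S.Φ : Set V) | l α = 0}

/-- `Φ_{[λ]} = {α ∈ Φ : ⟨λ, α^∨⟩ ∈ ℤ}`. -/
def integralSet (S : RootSys V) (l : HStar V) : Set V :=
  {α ∈ (S.Φ : Set V) | IsInt (l (coroot α))}

/-- `(ℚ A) ∩ Φ`, the intersection of the rational span of `A` with `Φ`.
Taking `A = Φ_I ∪ {β}` gives `Φ_{β,1}`; taking `A = Φ_λ ∪ {β}` gives `Φ_{β,2}`. -/
def ratSpanRoots (S : RootSys V) (A : Set V) : Set V :=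
  {γ ∈ (S.Φ : Set V) | ∃ (t : Finset V) (c : V → ℚ),
    (t : Set V) ⊆ A ∧ γ = ∑ α ∈ t, (c α : ℝ) • α}

/-- `Φ_{β,0}`, the irreducible component of `Φ` containing `β`. -/
def component (S : RootSys V) (β : V) : Set V :=
  {γ ∈ (S.Φ : Set V) |
    Relation.ReflTransGen
      (fun x y => x ∈ (S.Φ : Set V) ∧ y ∈ (S.Φ : Set V) ∧ ⟪x, y⟫ ≠ 0) β γ}

/-- `λ|_{Φ'}`: the unique element of `ℂΦ'` with `⟨λ|_{Φ'}, α^∨⟩ = ⟨λ, α^∨⟩`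
for all `α ∈ Φ'`. -/
def restrictW (Φ' : Set V) (l : HStar V) : HStar V :=
  letI : Nonempty (HStar V) := ⟨0⟩
  Classical.epsilon fun m =>
    m ∈ Submodule.span ℂ (emb '' Φ') ∧ ∀ α ∈ Φ', m (coroot α) = l (coroot α)

/-- `ᴵWᴶ = {w ∈ W : ℓ(uwv) = ℓ(u) + ℓ(w) + ℓ(v) for all u ∈ W_I, v ∈ W_J}`. -/
def doubleCoset (S : RootSys V) (I J : Finset V) : Set (V ≃ₗ[ℝ] V) :=
  {w | w ∈ weyl (S.Φ : Set V) ∧ ∀ u ∈ weyl (PhiI S I), ∀ v ∈ weyl (PhiI S J),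
    len S (u * w * v) = len S u + len S w + len S v}

/-- The fundamental weight `ϖ_j` relative to an enumeration `e` of the simple roots:
the unique element of `h*` with `⟨ϖ_j, α_k^∨⟩ = δ_{jk}`. -/
def fundWeight {n : ℕ} (e : Fin n → V) (j : Fin n) : HStar V :=
  letI : Nonempty (HStar V) := ⟨0⟩
  Classical.epsilon fun m => ∀ k : Fin n, m (coroot (e k)) = if k = j then 1 else 0

/-- The labels of the irreducible Dynkin types. -/
inductive LieType | A | B | C | D | E | F | G
deriving DecidableEq

/-- The Cartan matrix of type `A_n` (1-based indices): entry `(i,j)` is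
`⟨α_i, α_j^∨⟩`. -/
def cartanA (i j : ℕ) : ℤ :=
  if i = j then 2 else if i + 1 = j ∨ j + 1 = i then -1 else 0

/-- The Cartan matrices of the irreducible types in the standard (Bourbaki/Humphreys)
numbering of the Dynkin diagram: `cartanEntry t n i j = ⟨α_i, α_j^∨⟩` (1-based). -/
def cartanEntry : LieType → ℕ → ℕ → ℕ → ℤ
  | .A, _, i, j => cartanA i j
  | .B, n, i, j => if i + 1 = n ∧ j = n then -2 else cartanA i j
  | .C, n, i, j => if i = n ∧ j + 1 = n then -2 else cartanA i j
  | .D, n, i, j =>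
      if i = j then 2
      else if (i + 2 = n ∧ j = n) ∨ (i = n ∧ j + 2 = n) then -1
      else if (i + 1 = n ∧ j = n) ∨ (i = n ∧ j + 1 = n) then 0
      else cartanA i j
  | .E, _, i, j =>
      if i = j then 2
      else if (i = 1 ∧ j = 3) ∨ (i = 3 ∧ j = 1) ∨ (i = 2 ∧ j = 4) ∨ (i = 4 ∧ j = 2) then -1
      else if (i = 1 ∧ j = 2) ∨ (i = 2 ∧ j = 1) ∨ (i = 2 ∧ j = 3) ∨ (i = 3 ∧ j = 2) then 0
      else cartanA i j
  | .F, _, i, j => if i = 2 ∧ j = 3 then -2 else cartanA i j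
  | .G, _, i, j => if i = 2 ∧ j = 1 then -3 else cartanA i j

/-- The standard basis vector `e_k` (1-based index, junk `0` outside `1 ≤ k ≤ n`). -/
def stdE (n k : ℕ) : EuclideanSpace ℝ (Fin n) :=
  if h : 1 ≤ k ∧ k ≤ n then EuclideanSpace.single ⟨k - 1, by omega⟩ 1 else 0

/-- The labels `B`, `C`, `D` of the classical non-`A` types. -/
inductive BCD | B | C | D
deriving DecidableEq

/-- The root set of `B_n` / `C_n` / `D_n` in the standard realization. -/
def bcdRoots (t : BCD) (n : ℕ) : Set (EuclideanSpace ℝ (Fin n)) :=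
  {v | (∃ i j : ℕ, 1 ≤ i ∧ i < j ∧ j ≤ n ∧
          (v = stdE n i - stdE n j ∨ v = -(stdE n i - stdE n j) ∨
           v = stdE n i + stdE n j ∨ v = -(stdE n i + stdE n j))) ∨
       (match t with
        | .B => ∃ i : ℕ, 1 ≤ i ∧ i ≤ n ∧ (v = stdE n i ∨ v = -stdE n i)
        | .C => ∃ i : ℕ, 1 ≤ i ∧ i ≤ n ∧ (v = (2:ℝ) • stdE n i ∨ v = -((2:ℝ) • stdE n i))
        | .D => False)}

/-- The positive roots of `B_n` / `C_n` / `D_n` in the standard realization. -/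
def bcdPos (t : BCD) (n : ℕ) : Set (EuclideanSpace ℝ (Fin n)) :=
  {v | (∃ i j : ℕ, 1 ≤ i ∧ i < j ∧ j ≤ n ∧
          (v = stdE n i - stdE n j ∨ v = stdE n i + stdE n j)) ∨
       (match t with
        | .B => ∃ i : ℕ, 1 ≤ i ∧ i ≤ n ∧ v = stdE n i
        | .C => ∃ i : ℕ, 1 ≤ i ∧ i ≤ n ∧ v = (2:ℝ) • stdE n i
        | .D => False)}

/-- The simple roots of `B_n` / `C_n` / `D_n` in the standard realization. -/
def bcdSimple (t : BCD) (n : ℕ) : Set (EuclideanSpace ℝ (Fin n)) :=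
  {v | (∃ i : ℕ, 1 ≤ i ∧ i < n ∧ v = stdE n i - stdE n (i + 1)) ∨
       (match t with
        | .B => v = stdE n n
        | .C => v = (2:ℝ) • stdE n n
        | .D => v = stdE n (n - 1) + stdE n n)}

/-- The simple root `α_k` of `B_n` / `C_n` / `D_n` (1-based index `k`). -/
def bcdAlpha (t : BCD) (n k : ℕ) : EuclideanSpace ℝ (Fin n) :=
  if k < n then stdE n k - stdE n (k + 1)
  else match t with
  | .B => stdE n n
  | .C => (2:ℝ) • stdE n n
  | .D => stdE n (n - 1) + stdE n n

/-! The roots outside a union `C` of irreducible components are orthogonal to `C`, so a reflection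
in a root of `C` changes only the restriction of a weight to `C`, and a reflection in any other root
changes only the restriction to `Φ \ C`. Hence regularity, dominance and conjugacy under `W_I` can
each be tested separately on `C` and on `Φ \ C`. If `λ` and `μ` are conjugate away from `C`, then
for `b ∈ C` the weights `s_b λ` and `μ` are conjugate under `W_I` exactly when their restrictions to
`C` are, and the signs agree because the length of an element carrying a weight to a dominant one is
determined by the two weights. For `b ∉ C` the sign `sgn(s_b λ, μ)` vanishes: otherwise `λ` and
`s_b λ` would be conjugate away from `C`, which forces the nonzero multiple `⟨λ, b^∨⟩ b` of `b`
into the span of `I`, and so `b ∈ Φ_I`. -/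

section Coroots

omit [FiniteDimensional ℝ V]

lemma inner_coroot_self {α : V} (hα : α ≠ 0) : ⟪α, coroot α⟫ = 2 := by
  rw [coroot, real_inner_smul_right, div_mul_cancel₀ _ (inner_self_ne_zero.mpr hα)]

lemma inner_coroot_pos {α x : V} (h : 0 < ⟪x, α⟫) : 0 < ⟪x, coroot α⟫ := by
  have hα : 0 < ⟪α, α⟫ := by
    refine real_inner_self_pos.mpr fun h0 => ?_
    simp [h0] at h
  rw [coroot, real_inner_smul_right]
  positivity

lemma coroot_neg (α : V) : coroot (-α) = -coroot α := by
  simp [coroot]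

lemma emb_apply (α v : V) : emb α v = ((⟪α, v⟫ : ℝ) : ℂ) := rfl

lemma sRefl_apply (α x : V) (l : HStar V) : sRefl α l x = l x - l (coroot α) * emb α x := rfl

lemma sRefl_apply_of_inner_eq_zero {α x : V} (h : ⟪α, x⟫ = 0) (l : HStar V) :
    sRefl α l x = l x := by
  simp [sRefl_apply, emb_apply, h]

lemma apply_coroot_eq_zero_iff {l : HStar V} {α : V} : l (coroot α) = 0 ↔ l α = 0 := by
  rcases eq_or_ne α 0 with rfl | hα
  · simp [coroot]
  · simp [coroot, hα]

lemma apply_coroot_congr {l m : HStar V} {α : V} (h : l α = m α) :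
    l (coroot α) = m (coroot α) := by
  rw [coroot, map_smul, map_smul, h]

lemma wAct_mul (u w : V ≃ₗ[ℝ] V) (l : HStar V) : wAct (u * w) l = wAct u (wAct w l) := rfl

lemma wAct_apply_apply (w : V ≃ₗ[ℝ] V) (l : HStar V) (x : V) : wAct w l (w x) = l x :=
  congrArg l (w.symm_apply_apply x)

lemma emb_mem_span {C : Set V} {u : V} (hu : u ∈ Submodule.span ℝ C) :
    emb u ∈ Submodule.span ℂ (emb '' C) := by
  induction hu using Submodule.span_induction with
  | mem x hx => exact Submodule.subset_span ⟨x, hx, rfl⟩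
  | zero =>
    have : emb (0 : V) = 0 := by ext v; simp [emb_apply]
    rw [this]
    exact Submodule.zero_mem _
  | add x y _ _ hx hy =>
    have : emb (x + y) = emb x + emb y := by ext v; simp [emb_apply, inner_add_left]
    rw [this]
    exact Submodule.add_mem _ hx hy
  | smul c x _ hx =>
    have : emb (c • x) = (c : ℂ) • emb x := by ext v; simp [emb_apply, real_inner_smul_left]
    rw [this]
    exact Submodule.smul_mem _ _ hx

lemma apply_eq_zero_of_mem_span_emb {C : Set V} {d : HStar V}
    (hd : d ∈ Submodule.span ℂ (emb '' C)) {x : V} (hx : ∀ α ∈ C, ⟪α, x⟫ = 0) : d x = 0 := by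
  induction hd using Submodule.span_induction with
  | mem _ h =>
    obtain ⟨α, hα, rfl⟩ := h
    simp [emb_apply, hx α hα]
  | zero => rfl
  | add _ _ _ _ h₁ h₂ => simp [h₁, h₂]
  | smul _ _ _ h => simp [h]

end Coroots

section Reflections

lemma reflV_apply (α v : V) : reflV α v = v - ⟪v, coroot α⟫ • α := by
  unfold reflV
  split_ifs with h
  · simp [inner_self_eq_zero.mp h]
  · rw [Module.reflection_apply]
    rfl

lemma reflV_self {α : V} (hα : α ≠ 0) : reflV α α = -α := by
  rw [reflV_apply, inner_coroot_self hα]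
  module

lemma reflV_reflV (α v : V) : reflV α (reflV α v) = v := by
  rcases eq_or_ne α 0 with rfl | hα
  · simp [reflV_apply]
  · nth_rw 2 [reflV_apply]
    rw [map_sub, map_smul, reflV_self hα, reflV_apply]
    module

lemma reflV_inv (α : V) : (reflV α)⁻¹ = reflV α :=
  inv_eq_of_mul_eq_one_left (LinearEquiv.ext (reflV_reflV α))

lemma inner_reflV_reflV (α x y : V) : ⟪reflV α x, reflV α y⟫ = ⟪x, y⟫ := by
  rcases eq_or_ne α 0 with rfl | hα
  · simp [reflV_apply]
  · have hα' : ⟪α, α⟫ ≠ 0 := inner_self_ne_zero.mpr hα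
    simp only [reflV_apply, coroot, inner_sub_left, inner_sub_right, real_inner_smul_left,
      real_inner_smul_right, real_inner_comm α]
    field_simp
    ring

lemma coroot_reflV (α γ : V) :
    coroot (reflV α γ) = coroot γ - ⟪α, coroot γ⟫ • coroot α := by
  rw [coroot, inner_reflV_reflV, reflV_apply]
  simp only [coroot, real_inner_smul_right, real_inner_comm α γ]
  module

end Reflections

section WeylGroup

lemma reflV_mem_weyl {X : Set V} {α : V} (hα : α ∈ X) : reflV α ∈ weyl X :=
  Subgroup.subset_closure ⟨α, hα, rfl⟩

lemma weyl_mono {X Y : Set V} (h : X ⊆ Y) : weyl X ≤ weyl Y :=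
  Subgroup.closure_mono fun _ ⟨α, hα, e⟩ => ⟨α, h hα, e⟩

@[elab_as_elim]
lemma weyl_induction {X : Set V} {P : ∀ w : V ≃ₗ[ℝ] V, w ∈ weyl X → Prop} (one : P 1 (one_mem _))
    (reflV_mul : ∀ (α : V) (hα : α ∈ X) (w : V ≃ₗ[ℝ] V) (hw : w ∈ weyl X), P w hw →
      P (reflV α * w) (mul_mem (reflV_mem_weyl hα) hw))
    {w : V ≃ₗ[ℝ] V} (hw : w ∈ weyl X) : P w hw := by
  induction hw using Subgroup.closure_induction_left with
  | one => exact one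
  | mul_left _ hs w hw ih =>
    obtain ⟨α, hα, rfl⟩ := hs
    exact reflV_mul α hα w hw ih
  | inv_mul_cancel _ hs w hw ih =>
    obtain ⟨α, hα, rfl⟩ := hs
    simp only [reflV_inv]
    exact reflV_mul α hα w hw ih

lemma inner_weyl_apply {X : Set V} {w : V ≃ₗ[ℝ] V} (hw : w ∈ weyl X) (x y : V) :
    ⟪w x, w y⟫ = ⟪x, y⟫ := by
  induction hw using weyl_induction with
  | one => rfl
  | reflV_mul α _ w _ ih =>
    rw [LinearEquiv.mul_apply, LinearEquiv.mul_apply, inner_reflV_reflV, ih]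

lemma coroot_weyl_apply {X : Set V} {w : V ≃ₗ[ℝ] V} (hw : w ∈ weyl X) (α : V) :
    coroot (w α) = w (coroot α) := by
  rw [coroot, coroot, inner_weyl_apply hw, map_smul]

lemma weyl_apply_mem {X Y : Set V} (h : ∀ α ∈ X, ∀ γ ∈ Y, reflV α γ ∈ Y) {w : V ≃ₗ[ℝ] V}
    (hw : w ∈ weyl X) {γ : V} (hγ : γ ∈ Y) : w γ ∈ Y := by
  induction hw using weyl_induction with
  | one => exact hγ
  | reflV_mul α hα w _ ih => exact h α hα _ ih

lemma weyl_apply_sub_mem {X : Set V} {M : Submodule ℝ V} (h : X ⊆ M) {w : V ≃ₗ[ℝ] V}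
    (hw : w ∈ weyl X) (x : V) : w x - x ∈ M := by
  induction hw using weyl_induction with
  | one => simp
  | reflV_mul α hα w _ ih =>
    rw [LinearEquiv.mul_apply, reflV_apply, sub_right_comm]
    exact M.sub_mem ih (M.smul_mem _ (h hα))

end WeylGroup

section Weights

lemma wAct_reflV (α : V) (l : HStar V) : wAct (reflV α) l = sRefl α l := by
  ext x
  have key : wAct (reflV α) l x = l (reflV α x) := by
    conv_lhs => rw [← reflV_reflV α x]
    exact wAct_apply_apply _ _ _
  rw [key, reflV_apply, map_sub, map_smul, sRefl_apply, emb_apply, coroot, map_smul,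
    real_inner_smul_right, real_inner_comm x α, Complex.real_smul, Complex.real_smul]
  push_cast
  ring

/-- `Linked A l m` says that `m` lies in the orbit of `l` under the group `W(A)` generated by the
reflections in `A`; this is the conjugacy condition in the definition of the sign function. -/
def Linked (A : Set V) (l m : HStar V) : Prop := ∃ w ∈ weyl A, m = wAct w l

lemma Linked.refl (A : Set V) (l : HStar V) : Linked A l l := ⟨1, one_mem _, rfl⟩

lemma Linked.apply_eq {A : Set V} {l m : HStar V} (h : Linked A l m) {x : V}
    (hx : ∀ α ∈ A, ⟪α, x⟫ = 0) : m x = l x := by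
  obtain ⟨w, hw, rfl⟩ := h
  induction hw using weyl_induction with
  | one => rfl
  | reflV_mul α hα w _ ih =>
    rw [wAct_mul, wAct_reflV, sRefl_apply_of_inner_eq_zero (hx α hα), ih]

end Weights

lemma apply_coroot_eq_zero_of_linked {A : Set V} {l m : HStar V} {b : V} (h : Linked A l m)
    (hb : Linked A (sRefl b l) m) (hbA : b ∉ Submodule.span ℝ A) : l (coroot b) = 0 := by
  obtain ⟨x, hx, hbx⟩ : ∃ x ∈ (Submodule.span ℝ A)ᗮ, ⟪x, b⟫ ≠ 0 := by
    rw [← (Submodule.span ℝ A).orthogonal_orthogonal, Submodule.mem_orthogonal] at hbA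
    push Not at hbA
    exact hbA
  have hxA : ∀ α ∈ A, ⟪α, x⟫ = 0 := fun α hα => hx α (Submodule.subset_span hα)
  have key : l (coroot b) * emb b x = 0 := by
    have := (h.apply_eq hxA).symm.trans (hb.apply_eq hxA)
    rwa [sRefl_apply, eq_comm, sub_eq_self] at this
  refine (mul_eq_zero.mp key).resolve_right ?_
  rw [emb_apply, real_inner_comm]
  exact_mod_cast hbx

section Restriction

lemma exists_mem_span_emb_eqOn (C : Set V) (l : HStar V) :
    ∃ m ∈ Submodule.span ℂ (emb '' C), ∀ x ∈ Submodule.span ℝ C, m x = l x := by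
  let b := stdOrthonormalBasis ℝ (Submodule.span ℝ C)
  refine ⟨∑ i, l (b i : V) • emb (b i : V),
    Submodule.sum_mem _ fun i _ => Submodule.smul_mem _ _ (emb_mem_span (b i).2), fun x hx => ?_⟩
  have hsum : ∑ i, ⟪(b i : V), x⟫ • (b i : V) = x := by
    simpa using congrArg Subtype.val (b.sum_repr' ⟨x, hx⟩)
  conv_rhs => rw [← hsum]
  simp [emb_apply, mul_comm]

lemma restrictW_spec (C : Set V) (l : HStar V) :
    restrictW C l ∈ Submodule.span ℂ (emb '' C) ∧
      ∀ α ∈ C, restrictW C l (coroot α) = l (coroot α) := by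
  obtain ⟨m, hm, hml⟩ := exists_mem_span_emb_eqOn C l
  exact Classical.epsilon_spec (p := fun m : HStar V => m ∈ Submodule.span ℂ (emb '' C) ∧
    ∀ α ∈ C, m (coroot α) = l (coroot α))
    ⟨m, hm, fun α hα => apply_coroot_congr (hml α (Submodule.subset_span hα))⟩

lemma restrictW_mem_span (C : Set V) (l : HStar V) :
    restrictW C l ∈ Submodule.span ℂ (emb '' C) := (restrictW_spec C l).1

lemma restrictW_apply_coroot {C : Set V} {α : V} (hα : α ∈ C) (l : HStar V) :
    restrictW C l (coroot α) = l (coroot α) := (restrictW_spec C l).2 α hα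

lemma restrictW_apply {C : Set V} {α : V} (hα : α ∈ C) (l : HStar V) :
    restrictW C l α = l α := by
  rw [← sub_eq_zero, ← LinearMap.sub_apply, ← apply_coroot_eq_zero_iff, LinearMap.sub_apply,
    restrictW_apply_coroot hα, sub_self]

lemma eq_zero_of_mem_span_emb {C : Set V} {d : HStar V}
    (hd : d ∈ Submodule.span ℂ (emb '' C)) (h : ∀ α ∈ C, d α = 0) : d = 0 := by
  ext v
  obtain ⟨y, hy, z, hz, rfl⟩ := (Submodule.span ℝ C).exists_add_mem_mem_orthogonal v
  have hdy : d y = 0 := (Submodule.span_le.mpr h : Submodule.span ℝ C ≤ LinearMap.ker d) hy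
  have hdz : d z = 0 :=
    apply_eq_zero_of_mem_span_emb hd fun α hα => hz α (Submodule.subset_span hα)
  rw [map_add, hdy, hdz, add_zero, LinearMap.zero_apply]

lemma restrictW_eq_of_mem_span {C : Set V} {l m : HStar V}
    (hm : m ∈ Submodule.span ℂ (emb '' C)) (h : ∀ α ∈ C, m α = l α) : restrictW C l = m := by
  rw [← sub_eq_zero]
  refine eq_zero_of_mem_span_emb (Submodule.sub_mem _ (restrictW_mem_span C l) hm) fun α hα => ?_
  rw [LinearMap.sub_apply, restrictW_apply hα, h α hα, sub_self]

lemma restrictW_sRefl {C : Set V} {b : V} (hb : b ∈ C) (l : HStar V) :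
    restrictW C (sRefl b l) = sRefl b (restrictW C l) := by
  refine restrictW_eq_of_mem_span (Submodule.sub_mem _ (restrictW_mem_span C l)
    (Submodule.smul_mem _ _ (Submodule.subset_span ⟨b, hb, rfl⟩))) fun α hα => ?_
  rw [sRefl_apply, sRefl_apply, restrictW_apply hα, restrictW_apply_coroot hb]

lemma restrictW_sRefl_of_orthogonal {C : Set V} {b : V} (hb : ∀ α ∈ C, ⟪b, α⟫ = 0)
    (l : HStar V) : restrictW C (sRefl b l) = restrictW C l :=
  restrictW_eq_of_mem_span (restrictW_mem_span C l) fun α hα => by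
    rw [restrictW_apply hα, sRefl_apply_of_inner_eq_zero (hb α hα)]

lemma restrictW_wAct {C X : Set V} (hX : X ⊆ C) {w : V ≃ₗ[ℝ] V} (hw : w ∈ weyl X)
    (l : HStar V) : restrictW C (wAct w l) = wAct w (restrictW C l) := by
  induction hw using weyl_induction with
  | one => rfl
  | reflV_mul α hα w _ ih =>
    rw [wAct_mul, wAct_mul, wAct_reflV, wAct_reflV, restrictW_sRefl (hX hα), ih]

lemma restrictW_wAct_of_orthogonal {C X : Set V} (hX : ∀ α ∈ X, ∀ γ ∈ C, ⟪α, γ⟫ = 0)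
    {w : V ≃ₗ[ℝ] V} (hw : w ∈ weyl X) (l : HStar V) :
    restrictW C (wAct w l) = restrictW C l := by
  induction hw using weyl_induction with
  | one => rfl
  | reflV_mul α hα w _ ih =>
    rw [wAct_mul, wAct_reflV, restrictW_sRefl_of_orthogonal (hX α hα), ih]

end Restriction

section SimpleSystem

namespace RootSys

variable (S : RootSys V)

lemma neg_mem {α : V} (hα : α ∈ S.Φ) : -α ∈ S.Φ :=
  reflV_self (S.ne_zero α hα) ▸ S.refl_mem α hα α hα

lemma simple_mem {α : V} (hα : α ∈ S.Δ) : α ∈ S.Φ := S.pos_subset (S.simple_subset hα)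

lemma span_simple : Submodule.span ℝ (S.Δ : Set V) = ⊤ := by
  have hpos : ∀ α ∈ S.pos, α ∈ Submodule.span ℝ (S.Δ : Set V) := by
    intro α hα
    obtain ⟨c, -, rfl⟩ := S.simple_gen α hα
    exact Submodule.sum_mem _ fun i hi => Submodule.smul_mem _ _ (Submodule.subset_span hi)
  rw [eq_top_iff, ← S.span_eq_top, Submodule.span_le]
  intro α hα
  rcases S.mem_pos_or α hα with h | h
  · exact hpos α h
  · exact (Submodule.neg_mem_iff _).mp (hpos _ h)

/-- The simple roots as a basis of `V`; the coordinates of a positive root in it are nonnegative,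
and their sum is the height of the root. -/
def simpleBasis : Module.Basis {a : V // a ∈ S.Δ} ℝ V :=
  Module.Basis.mk S.simple_indep (by simpa using S.span_simple)

lemma simpleBasis_apply (i : {a : V // a ∈ S.Δ}) : S.simpleBasis i = i :=
  Module.Basis.mk_apply _ _ i

lemma simpleBasis_repr_nonneg {α : V} (hα : α ∈ S.pos) (i : {a : V // a ∈ S.Δ}) :
    0 ≤ S.simpleBasis.repr α i := by
  obtain ⟨c, hc, rfl⟩ := S.simple_gen α hα
  have hsum : ∑ j ∈ S.Δ, c j • j = ∑ j : {a : V // a ∈ S.Δ}, c j • S.simpleBasis j := by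
    simp only [simpleBasis_apply]
    exact (Finset.sum_coe_sort S.Δ fun j => c j • j).symm
  rw [hsum, Module.Basis.repr_sum_self]
  exact hc i i.2

lemma mem_span_iff_repr_eq_zero {I : Finset V} (hI : I ⊆ S.Δ) {x : V} :
    x ∈ Submodule.span ℝ (I : Set V) ↔
      ∀ j : {a : V // a ∈ S.Δ}, (j : V) ∉ I → S.simpleBasis.repr x j = 0 := by
  have himage : (I : Set V) = S.simpleBasis '' {j | (j : V) ∈ I} := by
    ext i
    simp only [Set.mem_image, Set.mem_ofPred_eq, simpleBasis_apply]
    exact ⟨fun hi => ⟨⟨i, hI hi⟩, hi, rfl⟩, by rintro ⟨j, hj, rfl⟩; exact hj⟩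
  rw [himage, Module.Basis.mem_span_image]
  exact forall_congr' fun j => by
    rw [Finset.mem_coe, Finsupp.mem_support_iff, Set.mem_ofPred_eq, not_imp_comm]

variable {S} {I : Finset V}

lemma eq_of_mem_pos_of_mem_span_singleton {i α : V} (hi : i ∈ S.Δ) (hα : α ∈ S.pos)
    (h : α ∈ Submodule.span ℝ {i}) : α = i := by
  obtain ⟨c, rfl⟩ := Submodule.mem_span_singleton.mp h
  rcases S.reduced i (S.simple_mem hi) c (S.pos_subset hα) with rfl | rfl
  · exact one_smul ℝ i
  · exact absurd (by simpa using hα) (S.not_both i (S.simple_subset hi))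

lemma mem_span_of_neg_mem_pos (hI : I ⊆ S.Δ) {γ δ : V} (hγ : γ ∈ S.pos) (hδ : -δ ∈ S.pos)
    (h : δ - γ ∈ Submodule.span ℝ (I : Set V)) : γ ∈ Submodule.span ℝ (I : Set V) := by
  rw [S.mem_span_iff_repr_eq_zero hI] at h ⊢
  intro j hj
  have h₁ := S.simpleBasis_repr_nonneg hγ j
  have h₂ := S.simpleBasis_repr_nonneg hδ j
  have h₃ := h j hj
  rw [map_neg, Finsupp.neg_apply] at h₂
  rw [map_sub, Finsupp.sub_apply] at h₃
  linarith

lemma reflV_simple_mem_pos {i α : V} (hi : i ∈ S.Δ) (hα : α ∈ S.pos) (hne : α ≠ i) :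
    reflV i α ∈ S.pos := by
  by_contra hneg
  have hneg' : -reflV i α ∈ S.pos :=
    (S.mem_pos_or _ (S.refl_mem i (S.simple_mem hi) α (S.pos_subset hα))).resolve_left hneg
  refine hne (eq_of_mem_pos_of_mem_span_singleton hi hα ?_)
  have := mem_span_of_neg_mem_pos (I := {i}) (by simpa using hi) hα hneg' <| by
    rw [Finset.coe_singleton]
    exact weyl_apply_sub_mem Submodule.subset_span (reflV_mem_weyl (X := {i}) rfl) α
  rwa [Finset.coe_singleton] at this

lemma exists_mem_inner_pos (hI : I ⊆ S.Δ) {α : V} (hα : α ∈ S.pos)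
    (hαI : α ∈ Submodule.span ℝ (I : Set V)) : ∃ i ∈ I, 0 < ⟪α, i⟫ := by
  by_contra! hno
  have hα0 : 0 < ⟪α, α⟫ := real_inner_self_pos.mpr (S.ne_zero α (S.pos_subset hα))
  refine hα0.not_ge ?_
  nth_rw 1 [← S.simpleBasis.sum_repr α]
  rw [sum_inner]
  refine Finset.sum_nonpos fun j _ => ?_
  rw [real_inner_smul_left, simpleBasis_apply, real_inner_comm]
  by_cases hj : (j : V) ∈ I
  · exact mul_nonpos_of_nonneg_of_nonpos (S.simpleBasis_repr_nonneg hα j) (hno j hj)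
  · rw [(S.mem_span_iff_repr_eq_zero hI).mp hαI j hj, zero_mul]

lemma sumCoords_reflV_lt {i α : V} (hi : i ∈ S.Δ) (h : 0 < ⟪α, i⟫) :
    S.simpleBasis.sumCoords (reflV i α) < S.simpleBasis.sumCoords α := by
  have hone : S.simpleBasis.sumCoords i = 1 := by
    simpa only [simpleBasis_apply] using S.simpleBasis.sumCoords_self_apply ⟨i, hi⟩
  rw [reflV_apply, map_sub, map_smul, hone, smul_eq_mul, mul_one]
  exact sub_lt_self _ (inner_coroot_pos h)

lemma pos_induction (hI : I ⊆ S.Δ) {P : V → Prop} (simple : ∀ i ∈ I, P i)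
    (reflect : ∀ i ∈ I, ∀ α ∈ S.pos, 0 < ⟪α, i⟫ → P (reflV i α) → P α) {α : V}
    (hα : α ∈ S.pos) (hαI : α ∈ Submodule.span ℝ (I : Set V)) : P α := by
  have hwf : (S.pos : Set V).WellFoundedOn
      (InvImage (· < ·) (S.simpleBasis.sumCoords : V → ℝ)) :=
    haveI : IsStrictOrder V (InvImage (· < ·) (S.simpleBasis.sumCoords : V → ℝ)) := {}
    S.pos.finite_toSet.wellFoundedOn
  refine hwf.induction (P := fun α => α ∈ Submodule.span ℝ (I : Set V) → P α) hα
    (fun α hα ih hαI => ?_) hαI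
  obtain ⟨i, hi, hαi⟩ := exists_mem_inner_pos hI hα hαI
  rcases eq_or_ne α i with rfl | hne
  · exact simple α hi
  · refine reflect i hi α hα hαi (ih _ (reflV_simple_mem_pos (hI hi) hα hne)
      (sumCoords_reflV_lt (hI hi) hαi) ?_)
    rw [reflV_apply]
    exact sub_mem hαI (Submodule.smul_mem _ _ (Submodule.subset_span hi))

end RootSys

end SimpleSystem

section ParabolicSubsystem

variable {S : RootSys V} {I : Finset V}

lemma PhiI_subset : PhiI S I ⊆ S.Φ := fun _ h => h.1

lemma subset_PhiI (hI : I ⊆ S.Δ) : (I : Set V) ⊆ PhiI S I :=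
  fun _ hi => ⟨S.simple_mem (hI hi), Submodule.subset_span hi⟩

lemma subset_Φ (hI : I ⊆ S.Δ) : (I : Set V) ⊆ S.Φ := (subset_PhiI hI).trans PhiI_subset

lemma neg_mem_PhiI {α : V} (hα : α ∈ PhiI S I) : -α ∈ PhiI S I :=
  ⟨S.neg_mem hα.1, neg_mem hα.2⟩

lemma reflV_mem_PhiI {α γ : V} (hα : α ∈ PhiI S I) (hγ : γ ∈ PhiI S I) :
    reflV α γ ∈ PhiI S I := by
  refine ⟨S.refl_mem α hα.1 γ hγ.1, ?_⟩
  obtain ⟨n, hn⟩ := S.crystallographic α hα.1 γ hγ.1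
  rw [reflV_apply, hn, Int.cast_smul_eq_zsmul]
  exact sub_mem hγ.2 (Submodule.smul_mem _ _ hα.2)

lemma mem_span_of_mem_PhiI {α : V} (hα : α ∈ PhiI S I) : α ∈ Submodule.span ℝ (I : Set V) :=
  Submodule.span_subset_span ℤ ℝ _ hα.2

lemma mem_PhiI_of_mem_pos (hI : I ⊆ S.Δ) {α : V} (hα : α ∈ S.pos)
    (hαI : α ∈ Submodule.span ℝ (I : Set V)) : α ∈ PhiI S I := by
  refine ⟨S.pos_subset hα, ?_⟩
  refine RootSys.pos_induction hI (P := (· ∈ Submodule.span ℤ (I : Set V)))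
    (fun i hi => Submodule.subset_span hi) (fun i hi α hα _ ih => ?_) hα hαI
  obtain ⟨n, hn⟩ := S.crystallographic i (S.simple_mem (hI hi)) α (S.pos_subset hα)
  rw [reflV_apply, hn, Int.cast_smul_eq_zsmul] at ih
  exact (Submodule.sub_mem_iff_left _
    (Submodule.smul_mem _ _ (Submodule.subset_span hi))).mp ih

lemma mem_PhiI_iff_mem_span (hI : I ⊆ S.Δ) {α : V} (hα : α ∈ S.Φ) :
    α ∈ PhiI S I ↔ α ∈ Submodule.span ℝ (I : Set V) := by
  refine ⟨mem_span_of_mem_PhiI, fun h => ?_⟩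
  rcases S.mem_pos_or α hα with hpos | hneg
  · exact mem_PhiI_of_mem_pos hI hpos h
  · exact neg_neg α ▸ neg_mem_PhiI (mem_PhiI_of_mem_pos hI hneg (neg_mem h))

end ParabolicSubsystem

section Dominance

variable {S : RootSys V} {I : Finset V}

lemma IsPosInt.ne_zero {z : ℂ} (h : IsPosInt z) : z ≠ 0 := by
  obtain ⟨n, hn, rfl⟩ := h
  exact_mod_cast hn.ne'

lemma IsPosInt.not_neg {z : ℂ} (h : IsPosInt z) : ¬ IsPosInt (-z) := by
  obtain ⟨n, hn, rfl⟩ := h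
  rintro ⟨m, hm, hnm⟩
  have : -n = m := by exact_mod_cast hnm
  lia

lemma isPosInt_apply_coroot (hI : I ⊆ S.Δ) {l : HStar V} (hl : l ∈ LambdaP (I : Set V)) {α : V}
    (hα : α ∈ PhiI S I) (hpos : α ∈ S.pos) : IsPosInt (l (coroot α)) := by
  refine RootSys.pos_induction hI (P := fun α => IsPosInt (l (coroot α))) hl
    (fun i hi α hα hαi ih => ?_) hpos (mem_span_of_mem_PhiI hα)
  obtain ⟨n, hn⟩ := S.crystallographic α (S.pos_subset hα) i (S.simple_mem (hI hi))
  have hn_pos : 0 < n := by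
    have := inner_coroot_pos ((real_inner_comm i α).symm ▸ hαi)
    rw [hn] at this
    exact_mod_cast this
  obtain ⟨m, hm, hm_eq⟩ := ih
  obtain ⟨k, hk, hk_eq⟩ := hl i hi
  rw [coroot_reflV, hn, map_sub, map_smul, hk_eq, sub_eq_iff_eq_add] at hm_eq
  exact ⟨m + n * k, by positivity, by rw [hm_eq]; simp⟩

lemma isRegularOn_PhiI (hI : I ⊆ S.Δ) {l : HStar V} (hl : l ∈ LambdaP (I : Set V)) :
    IsRegularOn (PhiI S I) l := by
  intro α hα
  rw [ne_eq, ← apply_coroot_eq_zero_iff]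
  rcases S.mem_pos_or α hα.1 with hpos | hneg
  · exact (isPosInt_apply_coroot hI hl hα hpos).ne_zero
  · simpa [coroot_neg] using (isPosInt_apply_coroot hI hl (neg_mem_PhiI hα) hneg).ne_zero

lemma weyl_apply_mem_Φ {A : Set V} (hA : A ⊆ S.Φ) {w : V ≃ₗ[ℝ] V} (hw : w ∈ weyl A) {γ : V}
    (hγ : γ ∈ S.Φ) : w γ ∈ S.Φ :=
  weyl_apply_mem (Y := (S.Φ : Set V)) (fun α hα γ hγ => S.refl_mem α (hA hα) γ hγ) hw hγ

lemma weyl_PhiI_apply_mem_pos (hI : I ⊆ S.Δ) {w : V ≃ₗ[ℝ] V} (hw : w ∈ weyl (PhiI S I)) {γ : V}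
    (hγ : γ ∈ S.pos) (hγI : γ ∉ PhiI S I) : w γ ∈ S.pos := by
  by_contra hneg
  have hneg' : -w γ ∈ S.pos :=
    (S.mem_pos_or _ (weyl_apply_mem_Φ PhiI_subset hw (S.pos_subset hγ))).resolve_left hneg
  have hsub : w γ - γ ∈ Submodule.span ℝ (I : Set V) :=
    weyl_apply_sub_mem (fun _ => mem_span_of_mem_PhiI) hw γ
  exact hγI (mem_PhiI_of_mem_pos hI hγ (RootSys.mem_span_of_neg_mem_pos hI hγ hneg' hsub))

lemma weyl_PhiI_apply_mem_pos_of_dominant (hI : I ⊆ S.Δ) {l : HStar V}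
    (hl : l ∈ LambdaP (I : Set V)) {w : V ≃ₗ[ℝ] V} (hw : w ∈ weyl (PhiI S I))
    (hwl : wAct w l ∈ LambdaP (I : Set V)) {γ : V} (hγ : γ ∈ S.pos) : w γ ∈ S.pos := by
  by_cases hγI : γ ∈ PhiI S I
  · have hwγ : w γ ∈ PhiI S I := weyl_apply_mem (fun α hα γ hγ => reflV_mem_PhiI hα hγ) hw hγI
    refine (S.mem_pos_or _ hwγ.1).resolve_right fun hneg => ?_
    have h := isPosInt_apply_coroot hI hwl (neg_mem_PhiI hwγ) hneg
    rw [coroot_neg, coroot_weyl_apply hw, map_neg, wAct_apply_apply] at h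
    exact (isPosInt_apply_coroot hI hl hγI hγ).not_neg h
  · exact weyl_PhiI_apply_mem_pos hI hw hγ hγI

lemma len_mul_of_mapsTo_pos {u w : V ≃ₗ[ℝ] V} (hu : ∀ γ ∈ S.pos, u γ ∈ S.pos)
    (hw : ∀ γ ∈ S.pos, w γ ∈ S.Φ) : len S (u * w) = len S w := by
  have hiff : ∀ γ ∈ S.pos, (u (w γ) ∈ S.pos ↔ w γ ∈ S.pos) := by
    refine fun γ hγ => ⟨fun h => ?_, hu _⟩
    refine (S.mem_pos_or _ (hw γ hγ)).resolve_right fun hneg => S.not_both _ h ?_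
    rw [← map_neg]
    exact hu _ hneg
  unfold len
  congr 1
  ext γ
  exact and_congr_right fun hγ => not_congr (hiff γ hγ)

lemma len_eq_len_of_dominant (hI : I ⊆ S.Δ) {l : HStar V} {w₁ w₂ : V ≃ₗ[ℝ] V}
    (hw₁ : w₁ ∈ weyl (PhiI S I)) (hw₂ : w₂ ∈ weyl (PhiI S I))
    (h₁ : wAct w₁ l ∈ LambdaP (I : Set V)) (h₂ : wAct w₂ l ∈ LambdaP (I : Set V)) :
    len S w₁ = len S w₂ := by
  have hu : w₁ * w₂⁻¹ ∈ weyl (PhiI S I) := mul_mem hw₁ (inv_mem hw₂)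
  have hul : wAct (w₁ * w₂⁻¹) (wAct w₂ l) ∈ LambdaP (I : Set V) := by
    rwa [← wAct_mul, inv_mul_cancel_right]
  rw [← len_mul_of_mapsTo_pos (S := S)
    (fun γ hγ => weyl_PhiI_apply_mem_pos_of_dominant hI h₂ hu hul hγ)
    (fun γ hγ => weyl_apply_mem_Φ PhiI_subset hw₂ (S.pos_subset hγ)), inv_mul_cancel_right]

end Dominance

section Summands

/-- `IsSummand S C` says that `C` is a union of irreducible components of `Φ`, expressed as: `C` is
a set of roots orthogonal to every root outside `C`. -/
structure IsSummand (S : RootSys V) (C : Set V) : Prop where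
  subset : C ⊆ S.Φ
  inner_eq_zero : ∀ a ∈ S.Φ, a ∉ C → ∀ c ∈ C, ⟪a, c⟫ = 0

variable {S : RootSys V} {A C : Set V} {l m : HStar V}

lemma isSummand_component (S : RootSys V) (β : V) : IsSummand S (component S β) where
  subset _ h := h.1
  inner_eq_zero a ha haC c hc := by
    by_contra hac
    exact haC ⟨ha, hc.2.tail ⟨hc.1, ha, by rwa [real_inner_comm]⟩⟩

lemma IsSummand.compl (hC : IsSummand S C) : IsSummand S (S.Φ \ C) where
  subset := Set.sdiff_subset
  inner_eq_zero a ha haC c hc := by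
    have : a ∈ C := by_contra fun h => haC ⟨ha, h⟩
    rw [real_inner_comm, hC.inner_eq_zero c hc.1 hc.2 a this]

lemma IsSummand.restrictW_compl_sRefl (hC : IsSummand S C) {b : V} (hb : b ∈ C) (l : HStar V) :
    restrictW (S.Φ \ C) (sRefl b l) = restrictW (S.Φ \ C) l :=
  restrictW_sRefl_of_orthogonal
    (hC.compl.inner_eq_zero b (hC.subset hb) fun h => h.2 hb) l

lemma IsSummand.restrictW_compl_wAct (hC : IsSummand S C) {w : V ≃ₗ[ℝ] V}
    (hw : w ∈ weyl (A ∩ C)) (l : HStar V) :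
    restrictW (S.Φ \ C) (wAct w l) = restrictW (S.Φ \ C) l :=
  restrictW_wAct_of_orthogonal
    (fun α hα => hC.compl.inner_eq_zero α (hC.subset hα.2) fun h => h.2 hα.2) hw l

lemma eq_of_restrictW_eq (h : restrictW C l = restrictW C m)
    (h' : restrictW (S.Φ \ C) l = restrictW (S.Φ \ C) m) : l = m := by
  refine LinearMap.ext_on S.span_eq_top fun α hα => ?_
  by_cases hαC : α ∈ C
  · rw [← restrictW_apply hαC l, h, restrictW_apply hαC]
  · have hαC' : α ∈ (S.Φ : Set V) \ C := ⟨hα, hαC⟩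
    rw [← restrictW_apply hαC' l, h', restrictW_apply hαC']

lemma Linked.restrictW (hC : IsSummand S C) (hA : A ⊆ S.Φ) (h : Linked A l m) :
    Linked (A ∩ C) (restrictW C l) (restrictW C m) := by
  obtain ⟨w, hw, rfl⟩ := h
  induction hw using weyl_induction with
  | one => exact .refl _ _
  | reflV_mul α hα w _ ih =>
    by_cases hαC : α ∈ C
    · obtain ⟨w', hw', hw'_eq⟩ := ih
      refine ⟨reflV α * w', mul_mem (reflV_mem_weyl ⟨hα, hαC⟩) hw', ?_⟩
      rw [wAct_mul, wAct_mul, wAct_reflV, wAct_reflV, restrictW_sRefl hαC, hw'_eq]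
    · rwa [wAct_mul, wAct_reflV,
        restrictW_sRefl_of_orthogonal (hC.inner_eq_zero α (hA hα) hαC)]

lemma linked_iff_restrictW (hC : IsSummand S C) (hA : A ⊆ S.Φ) :
    Linked A l m ↔ Linked (A ∩ C) (restrictW C l) (restrictW C m) ∧
      Linked (A ∩ (S.Φ \ C)) (restrictW (S.Φ \ C) l) (restrictW (S.Φ \ C) m) := by
  refine ⟨fun h => ⟨h.restrictW hC hA, h.restrictW hC.compl hA⟩, ?_⟩
  rintro ⟨⟨w, hw, hwC⟩, ⟨w', hw', hwC'⟩⟩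
  have horth : ∀ α ∈ A ∩ (S.Φ \ C), ∀ γ ∈ C, ⟪α, γ⟫ = 0 :=
    fun α hα => hC.inner_eq_zero α hα.2.1 hα.2.2
  refine ⟨w * w', mul_mem (weyl_mono Set.inter_subset_left hw)
    (weyl_mono Set.inter_subset_left hw'), eq_of_restrictW_eq (S := S) (C := C) ?_ ?_⟩
  · rw [wAct_mul, restrictW_wAct Set.inter_subset_right hw,
      restrictW_wAct_of_orthogonal horth hw', hwC]
  · rw [wAct_mul, hC.restrictW_compl_wAct hw, restrictW_wAct Set.inter_subset_right hw', hwC']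

lemma isRegularOn_iff_restrictW (hA : A ⊆ S.Φ) :
    IsRegularOn A l ↔ IsRegularOn (A ∩ C) (restrictW C l) ∧
      IsRegularOn (A ∩ (S.Φ \ C)) (restrictW (S.Φ \ C) l) := by
  refine ⟨fun h => ⟨fun α hα => ?_, fun α hα => ?_⟩, fun h α hα => ?_⟩
  · rw [restrictW_apply hα.2]
    exact h α hα.1
  · rw [restrictW_apply hα.2]
    exact h α hα.1
  · by_cases hαC : α ∈ C
    · exact restrictW_apply hαC l ▸ h.1 α ⟨hα, hαC⟩
    · have hαC' : α ∈ (S.Φ : Set V) \ C := ⟨hA hα, hαC⟩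
      exact restrictW_apply hαC' l ▸ h.2 α ⟨hα, hαC'⟩

lemma mem_LambdaP_iff_restrictW (hA : A ⊆ S.Φ) :
    l ∈ LambdaP A ↔ restrictW C l ∈ LambdaP (A ∩ C) ∧
      restrictW (S.Φ \ C) l ∈ LambdaP (A ∩ (S.Φ \ C)) := by
  refine ⟨fun h => ⟨fun α hα => ?_, fun α hα => ?_⟩, fun h α hα => ?_⟩
  · rw [restrictW_apply_coroot hα.2]
    exact h α hα.1
  · rw [restrictW_apply_coroot hα.2]
    exact h α hα.1
  · by_cases hαC : α ∈ C
    · exact restrictW_apply_coroot hαC l ▸ h.1 α ⟨hα, hαC⟩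
    · have hαC' : α ∈ (S.Φ : Set V) \ C := ⟨hA hα, hαC⟩
      exact restrictW_apply_coroot hαC' l ▸ h.2 α ⟨hα, hαC'⟩

lemma restrictW_mem_LambdaPSub {I : Finset V} (hI : I ⊆ S.Δ) (hl : l ∈ LambdaP (I : Set V)) :
    restrictW C l ∈ LambdaPSub S (PhiI S I ∩ C) C := by
  refine ⟨restrictW_mem_span C l, fun α hα => ?_⟩
  rw [restrictW_apply_coroot hα.1.2]
  exact isPosInt_apply_coroot hI hl hα.1.1 hα.2

end Summands

section Sign

variable {S : RootSys V} {I : Finset V} {A C : Set V} {l m : HStar V}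

lemma exists_sgnW_eq (S : RootSys V) (h : IsRegularOn A l ∧ IsRegularOn A m ∧ Linked A l m) :
    ∃ w ∈ weyl A, m = wAct w l ∧ sgnW S A l m = (-1) ^ len S w :=
  ⟨_, h.2.2.choose_spec.1, h.2.2.choose_spec.2, dif_pos h⟩

lemma sgnW_ne_zero_iff : sgnW S A l m ≠ 0 ↔ IsRegularOn A l ∧ IsRegularOn A m ∧ Linked A l m := by
  refine ⟨fun h => by_contra fun hcond => h (dif_neg hcond), fun h => ?_⟩
  obtain ⟨w, -, -, hsgn⟩ := exists_sgnW_eq S h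
  rw [hsgn]
  exact pow_ne_zero _ (by norm_num)

lemma sgnW_congr {A' : Set V} {l' m' : HStar V}
    (h : (IsRegularOn A l ∧ IsRegularOn A m ∧ Linked A l m) ↔
      (IsRegularOn A' l' ∧ IsRegularOn A' m' ∧ Linked A' l' m'))
    (hlen : ∀ w ∈ weyl A, ∀ w' ∈ weyl A', m = wAct w l → m' = wAct w' l' → len S w = len S w') :
    sgnW S A l m = sgnW S A' l' m' := by
  by_cases hA : IsRegularOn A l ∧ IsRegularOn A m ∧ Linked A l m
  · obtain ⟨w, hw, hw_eq, hsgn⟩ := exists_sgnW_eq S hA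
    obtain ⟨w', hw', hw'_eq, hsgn'⟩ := exists_sgnW_eq S (h.mp hA)
    rw [hsgn, hsgn', hlen w hw w' hw' hw_eq hw'_eq]
  · rw [not_not.mp (mt sgnW_ne_zero_iff.mp hA), not_not.mp (mt sgnW_ne_zero_iff.mp (mt h.mpr hA))]

variable {lam mu : HStar V}

lemma len_eq_len_of_restrictW_eq (hI : I ⊆ S.Δ) (hC : IsSummand S C)
    (hl : restrictW (S.Φ \ C) l ∈ LambdaP (I ∩ (S.Φ \ C)))
    (hmu : mu ∈ LambdaP (I : Set V)) {w w' : V ≃ₗ[ℝ] V} (hw : w ∈ weyl (PhiI S I))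
    (hw' : w' ∈ weyl (PhiI S I ∩ C)) (h : mu = wAct w l)
    (h' : restrictW C mu = wAct w' (restrictW C l)) : len S w = len S w' := by
  have hIΦ := subset_Φ hI
  refine len_eq_len_of_dominant hI (l := l) hw (weyl_mono Set.inter_subset_left hw') (h ▸ hmu) ?_
  rw [mem_LambdaP_iff_restrictW hIΦ (C := C), restrictW_wAct Set.inter_subset_right hw', ← h',
    hC.restrictW_compl_wAct hw']
  exact ⟨((mem_LambdaP_iff_restrictW hIΦ).mp hmu).1, hl⟩

lemma sgnW_restrictW (hI : I ⊆ S.Δ) (hC : IsSummand S C) (hlam : lam ∈ LambdaP (I : Set V))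
    (hmu : mu ∈ LambdaP (I : Set V)) (hl : restrictW (S.Φ \ C) l = restrictW (S.Φ \ C) lam)
    (h : Linked (PhiI S I ∩ (S.Φ \ C)) (restrictW (S.Φ \ C) lam) (restrictW (S.Φ \ C) mu)) :
    sgnW S (PhiI S I) l mu = sgnW S (PhiI S I ∩ C) (restrictW C l) (restrictW C mu) := by
  have hlam_reg := (isRegularOn_iff_restrictW (C := C) PhiI_subset).mp (isRegularOn_PhiI hI hlam)
  have hmu_reg := (isRegularOn_iff_restrictW (C := C) PhiI_subset).mp (isRegularOn_PhiI hI hmu)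
  refine sgnW_congr ?_ fun w hw w' hw' => ?_
  · rw [isRegularOn_iff_restrictW (C := C) PhiI_subset, isRegularOn_iff_restrictW (l := mu)
      (C := C) PhiI_subset, linked_iff_restrictW hC PhiI_subset, hl]
    simp only [hlam_reg.2, hmu_reg.2, h, and_true]
  · refine len_eq_len_of_restrictW_eq hI hC ?_ hmu hw hw'
    rw [hl]
    exact ((mem_LambdaP_iff_restrictW (subset_Φ hI)).mp hlam).2

end Sign

section JantzenCoefficient

variable {S : RootSys V} {I : Finset V} {C : Set V} {lam mu : HStar V}

lemma sgnW_sRefl_eq_zero (hI : I ⊆ S.Δ) (hC : IsSummand S C)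
    (h : Linked (PhiI S I ∩ C) (restrictW C lam) (restrictW C mu)) {b : V} (hbC : b ∈ C)
    (hbI : b ∉ PhiI S I) (hb : lam (coroot b) ≠ 0) :
    sgnW S (PhiI S I) (sRefl b lam) mu = 0 := by
  by_contra hsgn
  have hlink := (sgnW_ne_zero_iff.mp hsgn).2.2.restrictW hC PhiI_subset
  rw [restrictW_sRefl hbC] at hlink
  have hspan : Submodule.span ℝ (PhiI S I ∩ C) ≤ Submodule.span ℝ (I : Set V) :=
    Submodule.span_le.mpr fun α hα => mem_span_of_mem_PhiI hα.1
  refine hb ?_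
  rw [← restrictW_apply_coroot hbC]
  exact apply_coroot_eq_zero_of_linked h hlink fun hbs =>
    hbI ((mem_PhiI_iff_mem_span hI (hC.subset hbC)).mpr (hspan hbs))

lemma PsiPP_restrictW (hI : I ⊆ S.Δ) (hC : IsSummand S C) (hlam : lam ∈ LambdaP (I : Set V)) :
    PsiPP S (PhiI S I ∩ C) C (restrictW C lam) = PsiPP S (PhiI S I) S.Φ lam ∩ C := by
  have hlam_reg :=
    ((isRegularOn_iff_restrictW (C := C) PhiI_subset).mp (isRegularOn_PhiI hI hlam)).2
  have hreg : ∀ b ∈ C, (IsRegularOn (PhiI S I) (sRefl b lam) ↔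
      IsRegularOn (PhiI S I ∩ C) (sRefl b (restrictW C lam))) := fun b hb => by
    rw [isRegularOn_iff_restrictW (C := C) PhiI_subset, restrictW_sRefl hb,
      hC.restrictW_compl_sRefl hb, and_iff_left hlam_reg]
  ext b
  constructor
  · rintro ⟨⟨⟨hbC, hb_pos⟩, hbI, hb_int⟩, hb_reg⟩
    rw [restrictW_apply_coroot hbC] at hb_int
    exact ⟨⟨⟨⟨hC.subset hbC, hb_pos⟩, fun h => hbI ⟨h, hbC⟩, hb_int⟩, (hreg b hbC).mpr hb_reg⟩, hbC⟩
  · rintro ⟨⟨⟨⟨-, hb_pos⟩, hbI, hb_int⟩, hb_reg⟩, hbC⟩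
    rw [← restrictW_apply_coroot hbC] at hb_int
    exact ⟨⟨⟨hbC, hb_pos⟩, fun h => hbI h.1, hb_int⟩, (hreg b hbC).mp hb_reg⟩

lemma jc_eq_jc_restrictW (hI : I ⊆ S.Δ) (hC : IsSummand S C) (hlam : lam ∈ LambdaP (I : Set V))
    (hmu : mu ∈ LambdaP (I : Set V))
    (h : Linked (PhiI S I ∩ (S.Φ \ C)) (restrictW (S.Φ \ C) lam) (restrictW (S.Φ \ C) mu)) :
    jc S (PhiI S I) S.Φ lam mu =
      jc S (PhiI S I ∩ C) C (restrictW C lam) (restrictW C mu) := by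
  have hzero : ∀ b ∈ PsiPP S (PhiI S I) S.Φ lam, b ∉ C →
      sgnW S (PhiI S I) (sRefl b lam) mu = 0 := fun b hb hbC =>
    sgnW_sRefl_eq_zero hI hC.compl h ⟨hb.1.1.1, hbC⟩ hb.1.2.1 hb.1.2.2.ne_zero
  unfold jc
  rw [PsiPP_restrictW hI hC hlam]
  calc ∑ᶠ b ∈ PsiPP S (PhiI S I) S.Φ lam, sgnW S (PhiI S I) (sRefl b lam) mu
      = ∑ᶠ b ∈ PsiPP S (PhiI S I) S.Φ lam ∩ C, sgnW S (PhiI S I) (sRefl b lam) mu :=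
        finsum_mem_inter_support_eq' _ _ _ fun b hb =>
          ⟨fun hbΨ => ⟨hbΨ, by_contra fun hbC => hb (hzero b hbΨ hbC)⟩, And.left⟩
    _ = ∑ᶠ b ∈ PsiPP S (PhiI S I) S.Φ lam ∩ C,
          sgnW S (PhiI S I ∩ C) (sRefl b (restrictW C lam)) (restrictW C mu) :=
        finsum_mem_congr rfl fun b hb => by
          rw [sgnW_restrictW hI hC hlam hmu (hC.restrictW_compl_sRefl hb.2 lam) h,
            restrictW_sRefl hb.2]

end JantzenCoefficient

theorem statement_6_general (S : RootSys V) (I : Finset V) (hI : I ⊆ S.Δ) {C : Set V}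
    (hC : IsSummand S C) {lam : HStar V} (hlam : lam ∈ LambdaP (I : Set V)) {β : V} (hβ : β ∈ C) :
    ((∃ mu ∈ LambdaP (I : Set V), sgnW S (PhiI S I) (sRefl β lam) mu ≠ 0) ↔
      (∃ mu' ∈ LambdaPSub S (PhiI S I ∩ C) C,
        sgnW S (PhiI S I ∩ C) (sRefl β (restrictW C lam)) mu' ≠ 0)) ∧
    (∀ mu ∈ LambdaP (I : Set V), sgnW S (PhiI S I) (sRefl β lam) mu ≠ 0 →
      restrictW C mu ∈ LambdaPSub S (PhiI S I ∩ C) C ∧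
      sgnW S (PhiI S I ∩ C) (sRefl β (restrictW C lam)) (restrictW C mu) ≠ 0 ∧
      jc S (PhiI S I) (S.Φ : Set V) lam mu =
        jc S (PhiI S I ∩ C) C (restrictW C lam) (restrictW C mu)) := by
  have hβ' : restrictW (S.Φ \ C) (sRefl β lam) = restrictW (S.Φ \ C) lam :=
    hC.restrictW_compl_sRefl hβ lam
  have hrestrict : ∀ mu ∈ LambdaP (I : Set V), sgnW S (PhiI S I) (sRefl β lam) mu ≠ 0 →
      restrictW C mu ∈ LambdaPSub S (PhiI S I ∩ C) C ∧
      sgnW S (PhiI S I ∩ C) (sRefl β (restrictW C lam)) (restrictW C mu) ≠ 0 ∧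
      jc S (PhiI S I) (S.Φ : Set V) lam mu =
        jc S (PhiI S I ∩ C) C (restrictW C lam) (restrictW C mu) := by
    intro mu hmu hsgn
    have h := (sgnW_ne_zero_iff.mp hsgn).2.2.restrictW hC.compl PhiI_subset
    rw [hβ'] at h
    rw [sgnW_restrictW hI hC hlam hmu hβ' h, restrictW_sRefl hβ] at hsgn
    exact ⟨restrictW_mem_LambdaPSub hI hmu, hsgn, jc_eq_jc_restrictW hI hC hlam hmu h⟩
  refine ⟨⟨fun ⟨mu, hmu, hsgn⟩ => ?_, fun ⟨mu', hmu', hsgn⟩ => ?_⟩, hrestrict⟩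
  · obtain ⟨hmu', hsgn', -⟩ := hrestrict mu hmu hsgn
    exact ⟨_, hmu', hsgn'⟩
  · obtain ⟨w, hw, hw_eq⟩ := (sgnW_ne_zero_iff.mp hsgn).2.2
    have hC_eq : restrictW C (wAct w (sRefl β lam)) = mu' := by
      rw [restrictW_wAct Set.inter_subset_right hw, restrictW_sRefl hβ, hw_eq]
    have hC'_eq : restrictW (S.Φ \ C) (wAct w (sRefl β lam)) = restrictW (S.Φ \ C) lam := by
      rw [hC.restrictW_compl_wAct hw, hβ']
    have hIΦ := subset_Φ hI
    have hmu : wAct w (sRefl β lam) ∈ LambdaP (I : Set V) := by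
      rw [mem_LambdaP_iff_restrictW hIΦ (C := C), hC_eq, hC'_eq]
      exact ⟨fun i hi => hmu'.2 i ⟨⟨subset_PhiI hI hi.1, hi.2⟩, S.simple_subset (hI hi.1)⟩,
        ((mem_LambdaP_iff_restrictW hIΦ).mp hlam).2⟩
    refine ⟨_, hmu, ?_⟩
    rwa [sgnW_restrictW hI hC hlam hmu hβ' (hC'_eq ▸ .refl _ _), restrictW_sRefl hβ, hC_eq]

/-- Lemma 4.7 (Irreducible invariance): for `λ ∈ Λ_I⁺` and `β ∈ Ψ_λ⁺`, there is
`μ ∈ Λ_I⁺` with `sgn(s_β λ, μ) ≠ 0` iff there is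
`μ' ∈ Λ⁺(Φ_I ∩ Φ_{β,0}, Φ_{β,0})` with
`sgn(s_β (λ|_{Φ_{β,0}}), μ', Φ_I ∩ Φ_{β,0}, Φ_{β,0}) ≠ 0`; and if `sgn(s_β λ, μ) ≠ 0`
then `μ' = μ|_{Φ_{β,0}}` works and
`c(λ, μ) = c(λ|_{Φ_{β,0}}, μ|_{Φ_{β,0}}, Φ_I ∩ Φ_{β,0}, Φ_{β,0})`. -/
theorem statement_6 {V : Type*} [NormedAddCommGroup V] [InnerProductSpace ℝ V]
    [FiniteDimensional ℝ V]
    (S : RootSys V) (I : Finset V) (hI : I ⊆ S.Δ)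
    (lam : HStar V) (hlam : lam ∈ LambdaP (I : Set V))
    (β : V) (hβ : β ∈ PsiP S (PhiI S I) (S.Φ : Set V) lam) :
    ((∃ mu ∈ LambdaP (I : Set V), sgnW S (PhiI S I) (sRefl β lam) mu ≠ 0) ↔
      (∃ mu' ∈ LambdaPSub S (PhiI S I ∩ component S β) (component S β),
        sgnW S (PhiI S I ∩ component S β)
          (sRefl β (restrictW (component S β) lam)) mu' ≠ 0)) ∧
    (∀ mu ∈ LambdaP (I : Set V), sgnW S (PhiI S I) (sRefl β lam) mu ≠ 0 →
      restrictW (component S β) mu ∈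
        LambdaPSub S (PhiI S I ∩ component S β) (component S β) ∧
      sgnW S (PhiI S I ∩ component S β) (sRefl β (restrictW (component S β) lam))
        (restrictW (component S β) mu) ≠ 0 ∧
      jc S (PhiI S I) (S.Φ : Set V) lam mu =
        jc S (PhiI S I ∩ component S β) (component S β)
          (restrictW (component S β) lam) (restrictW (component S β) mu)) :=
  statement_6_general S I hI (isSummand_component S β) hlam ⟨hβ.1.1, .refl⟩

end JantzenGVM
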